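/- arXiv:2406.15529 — 4 statements merged into one kernel-verified Lean document; each statement's English description precedes it below -/
import Mathlib

section
/- Privacy of n-out-of-n XOR secret sharing against any n−1 shares: let σ : ℕ, n ≥ 1, and s : BitVec σ. Define the sharing map taking r : Fin (n-1) → BitVec σ to the n shares (r 0, …, r (n-2), (XOR of all r i) ^^^ s) : Fin n → BitVec σ. Then for every index j : Fin n, the pushforward of the uniform distribution on (Fin (n-1) → BitVec σ) under the map sending r to the tuple of shares with coordinate j omitted equals the uniform distribution on (Fin (n-1) → BitVec σ)-indexed tuples of BitVec σ; in particular this distribution does not depend on the secret s. -/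
/-!
The XOR of all `n` shares is the secret. Hence the `n - 1` shares with index `≠ j` determine
the share `j`, and thus all shares; the first `n - 1` of these are the randomness `r`. So
`r ↦ (shares without coordinate j)` is injective, therefore a bijection of a finite type, and
bijections preserve the uniform distribution.
-/

instance (w : ℕ) : Fintype (BitVec w) :=
  Fintype.ofEquiv (Fin (2 ^ w)) ⟨BitVec.ofFin, BitVec.toFin, fun _ => rfl, fun _ => rfl⟩

/-- XOR of an indexed family of bitvectors: fold of `^^^` with identity `0`. -/
def xorAll {n σ : ℕ} (r : Fin n → BitVec σ) : BitVec σ :=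
  Finset.univ.fold (· ^^^ ·) 0 r

/-- The n-out-of-n XOR sharing of a secret `s`: the first `n - 1` shares are as
given, and the last share is the XOR of those shares with the secret. -/
def shares {σ n : ℕ} (s : BitVec σ) (r : Fin (n - 1) → BitVec σ) : Fin n → BitVec σ :=
  fun j => if h : (j : ℕ) < n - 1 then r ⟨j, h⟩ else xorAll r ^^^ s

theorem xorAll_succAbove {m σ : ℕ} (f : Fin (m + 1) → BitVec σ) (j : Fin (m + 1)) :
    xorAll f = f j ^^^ xorAll (fun i => f (j.succAbove i)) := by
  unfold xorAll
  rw [Fin.univ_succAbove m j, Finset.fold_cons, Finset.fold_map]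
  rfl

theorem shares_castSucc {m σ : ℕ} (s : BitVec σ) (r : Fin m → BitVec σ) (i : Fin m) :
    shares (n := m + 1) s r i.castSucc = r i := by
  simp [shares]

/-- Correctness of the scheme: the XOR of all shares reconstructs the secret. -/
theorem xorAll_shares {m σ : ℕ} (s : BitVec σ) (r : Fin m → BitVec σ) :
    xorAll (shares (n := m + 1) s r) = s := by
  have hlast : shares (n := m + 1) s r (Fin.last m) = xorAll r ^^^ s := by simp [shares]
  rw [xorAll_succAbove _ (Fin.last m), hlast]
  simp only [Fin.succAbove_last, shares_castSucc]
  rw [BitVec.xor_comm (xorAll r) s, BitVec.xor_assoc, BitVec.xor_self, BitVec.xor_zero]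

theorem shares_succAbove_injective {m σ : ℕ} (s : BitVec σ) (j : Fin (m + 1)) :
    Function.Injective (fun (r : Fin m → BitVec σ) (i : Fin m) =>
      shares (n := m + 1) s r (j.succAbove i)) := by
  intro r r' h
  -- Both full tuples XOR to `s` and agree off `j`, so cancellation gives agreement at `j`.
  have hj : shares (n := m + 1) s r j = shares (n := m + 1) s r' j := by
    have e := (xorAll_shares s r).trans (xorAll_shares s r').symm
    rw [xorAll_succAbove _ j, xorAll_succAbove _ j] at e
    simp only at h
    rw [h] at e
    exact (BitVec.xor_left_inj _).mp e
  have hall : shares (n := m + 1) s r = shares (n := m + 1) s r' := by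
    funext k
    rcases Fin.eq_self_or_eq_succAbove j k with rfl | ⟨i, rfl⟩
    · exact hj
    · exact congrFun h i
  funext i
  rw [← shares_castSucc s r i, hall, shares_castSucc]

theorem map_uniformOfFintype_of_injective {α : Type*} [Fintype α] [Nonempty α] {f : α → α}
    (hf : Function.Injective f) :
    PMF.map f (PMF.uniformOfFintype α) = PMF.uniformOfFintype α := by
  classical
  ext b
  obtain ⟨a, rfl⟩ := (Finite.injective_iff_surjective.mp hf) b
  rw [PMF.map_apply, tsum_eq_single a]
  · simp
  · intro a' ha'
    rw [if_neg fun h => ha' (hf h).symm]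

/-- Privacy of n-out-of-n XOR secret sharing against any `n - 1` shares: for any
index `j`, the tuple of shares with coordinate `j` omitted (computed from
uniformly random `r`) is uniformly distributed, independently of the secret. -/
theorem xor_secret_sharing_privacy (σ n : ℕ) (hn : 1 ≤ n) (s : BitVec σ) (j : Fin n) :
    PMF.map
      (fun r : Fin (n - 1) → BitVec σ => fun i : Fin (n - 1) =>
        shares s r
          (Fin.cast (Nat.succ_pred_eq_of_pos hn)
            ((Fin.cast (Nat.succ_pred_eq_of_pos hn).symm j).succAbove i)))
      (PMF.uniformOfFintype (Fin (n - 1) → BitVec σ)) =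
      PMF.uniformOfFintype (Fin (n - 1) → BitVec σ) := by
  obtain ⟨m, rfl⟩ : ∃ m, n = m + 1 := ⟨n - 1, by omega⟩
  exact map_uniformOfFintype_of_injective (shares_succAbove_injective s j)
end

section
/- The encrypted, permuted pair seen by the helper is uniform: for every σ : ℕ, all messages m₀ m₁ : BitVec σ, and every control bit s₁ : Bool, the pushforward of the uniform distribution on BitVec σ × BitVec σ under the map (k₀, k₁) ↦ π s₁ (m₀ ^^^ k₀, m₁ ^^^ k₁) equals the uniform distribution on BitVec σ × BitVec σ. In particular the distribution of this pair is the same for all choices of (m₀, m₁, s₁). -/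
/-- Controlled swap: `cswap false (a, b) = (a, b)`, `cswap true (a, b) = (b, a)`. -/
def cswap {α : Type*} : Bool → α × α → α × α
  | false, p => p
  | true, (a, b) => (b, a)

/-- A uniform distribution is invariant under pushforward by a bijection: each point has exactly
one preimage, and all points carry the same mass. -/
theorem map_uniformOfFintype_of_bijective {α : Type*} [Fintype α] [Nonempty α] {f : α → α}
    (hf : Function.Bijective f) :
    PMF.map f (PMF.uniformOfFintype α) = PMF.uniformOfFintype α := by
  classical
  ext b
  obtain ⟨a, rfl⟩ := hf.2 b
  rw [PMF.map_apply, tsum_eq_single a]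
  · simp
  · intro a' ha'
    exact if_neg fun h => ha' (hf.1 h).symm

/-- The encrypted, permuted pair seen by the helper is uniform, for every choice
of messages `m₀, m₁` and control bit `s₁`. -/
theorem helper_pair_uniform (σ : ℕ) (m₀ m₁ : BitVec σ) (s₁ : Bool) :
    PMF.map (fun k : BitVec σ × BitVec σ => cswap s₁ (m₀ ^^^ k.1, m₁ ^^^ k.2))
      (PMF.uniformOfFintype (BitVec σ × BitVec σ)) =
      PMF.uniformOfFintype (BitVec σ × BitVec σ) := by
  apply map_uniformOfFintype_of_bijective
  -- On a finite type injectivity suffices, and XOR with a fixed string can be cancelled.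
  rw [← Finite.injective_iff_bijective]
  rintro ⟨a, b⟩ ⟨c, d⟩ h
  cases s₁ <;> simp_all [cswap, BitVec.xor_right_inj]
end

section
/- Helper-view simulation (content of Equation (2) of Theorem 1): for every σ : ℕ, all messages m₀ m₁ : BitVec σ, and every choice bit s : Bool, the pushforward of the uniform distribution on Bool × (BitVec σ × BitVec σ) under the map (s₁, k₀, k₁) ↦ (s₁ ^^ s, π s₁ (m₀ ^^^ k₀, m₁ ^^^ k₁)) equals the uniform distribution on Bool × (BitVec σ × BitVec σ). Hence the joint distribution of the helper's entire incoming view, consisting of its share s₂ = s₁ ^^ s and the permuted encrypted pair e', is identical for all inputs (m₀, m₁, s). -/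
/-- Helper-view simulation: the joint distribution of the helper's share
`s₂ = s₁ ^^ s` and the permuted encrypted pair is uniform, for all inputs
`(m₀, m₁, s)`. -/
theorem helper_view_uniform (σ : ℕ) (m₀ m₁ : BitVec σ) (s : Bool) :
    PMF.map
      (fun x : Bool × (BitVec σ × BitVec σ) =>
        (x.1 ^^ s, cswap x.1 (m₀ ^^^ x.2.1, m₁ ^^^ x.2.2)))
      (PMF.uniformOfFintype (Bool × (BitVec σ × BitVec σ))) =
      PMF.uniformOfFintype (Bool × (BitVec σ × BitVec σ)) := by
  -- On a finite type it suffices that the view map is injective: `s₂` and `s` determine `s₁`,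
  -- so the swap can be undone, and then the one-time pads recover `k₀` and `k₁`.
  refine map_uniformOfFintype_of_bijective (Finite.injective_iff_bijective.mp ?_)
  rintro ⟨a, k₀, k₁⟩ ⟨b, l₀, l₁⟩ h
  obtain ⟨hs, he⟩ := Prod.mk.inj h
  obtain rfl : a = b := by simpa using hs
  cases a <;> simp_all [cswap]
end

section
/- Receiver-view simulation (content of Equation (3) of Theorem 1): for every σ : ℕ, all messages m₀ m₁ : BitVec σ, and every choice bit s : Bool, the distribution over uniform keys (k₀, k₁) of the single message the receiver obtains in the real protocol, namely (π s₂ (π s₁ (m₀ ^^^ k₀, m₁ ^^^ k₁))).1 for any fixed shares s₁ s₂ : Bool with s₁ ^^ s₂ = s, equals the distribution over a uniform key k of the simulator's message m_s ^^^ k, where m_s := if s then m₁ else m₀; both equal the uniform distribution on BitVec σ. -/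
theorem map_equiv_uniform {α β : Type*} [Fintype α] [Nonempty α] [Fintype β] [Nonempty β]
    (e : α ≃ β) :
    PMF.map e (PMF.uniformOfFintype α) = PMF.uniformOfFintype β := by
  classical
  ext b
  rw [PMF.map_apply, tsum_eq_single (e.symm b)]
  · simp [Fintype.card_congr e]
  · intro a ha
    rw [if_neg]
    rintro rfl
    simp at ha

theorem map_fst_uniform (α β : Type*) [Fintype α] [Nonempty α] [Fintype β] [Nonempty β] :
    PMF.map Prod.fst (PMF.uniformOfFintype (α × β)) = PMF.uniformOfFintype α := by
  classical
  ext a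
  rw [PMF.map_apply, tsum_fintype, Fintype.sum_prod_type]
  have h : (Fintype.card β : ENNReal) ≠ 0 := by simp
  simp only [PMF.uniformOfFintype_apply, Finset.sum_const, Finset.card_univ, nsmul_eq_mul,
    mul_ite, mul_zero, Finset.sum_ite_eq, Finset.mem_univ, if_true, Fintype.card_prod,
    Nat.cast_mul]
  rw [ENNReal.mul_inv (by simp) (by simp), mul_left_comm,
    ENNReal.mul_inv_cancel h (by simp), mul_one]

theorem map_snd_uniform (α β : Type*) [Fintype α] [Nonempty α] [Fintype β] [Nonempty β] :
    PMF.map Prod.snd (PMF.uniformOfFintype (α × β)) = PMF.uniformOfFintype β := by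
  rw [← map_fst_uniform β α, ← map_equiv_uniform (Equiv.prodComm α β), PMF.map_comp]
  rfl

/-- XOR with a fixed string, an involution. -/
def xorEquiv {σ : ℕ} (m : BitVec σ) : BitVec σ ≃ BitVec σ where
  toFun k := m ^^^ k
  invFun k := m ^^^ k
  left_inv k := by simp
  right_inv k := by simp

/-- Receiver-view simulation: the message the receiver obtains in the real
protocol (over uniform keys) is distributed exactly as the simulator's message
`m_s ^^^ k` for a uniform key `k`; both are uniform on `BitVec σ`. -/
theorem receiver_view_simulation (σ : ℕ) (m₀ m₁ : BitVec σ) (s s₁ s₂ : Bool)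
    (hs : s₁ ^^ s₂ = s) :
    PMF.map
        (fun k : BitVec σ × BitVec σ =>
          (cswap s₂ (cswap s₁ (m₀ ^^^ k.1, m₁ ^^^ k.2))).1)
        (PMF.uniformOfFintype (BitVec σ × BitVec σ)) =
      PMF.map (fun k : BitVec σ => (if s then m₁ else m₀) ^^^ k)
        (PMF.uniformOfFintype (BitVec σ)) ∧
    PMF.map (fun k : BitVec σ => (if s then m₁ else m₀) ^^^ k)
        (PMF.uniformOfFintype (BitVec σ)) =
      PMF.uniformOfFintype (BitVec σ) := by
  refine ⟨?_, map_equiv_uniform (xorEquiv (if s then m₁ else m₀))⟩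
  -- `=` binds tighter than `^^`, so `hs` reads `(s₁ ^^ decide (s₂ = s)) = true`; this is equivalent
  -- to the sharing condition `(s₁ ^^ s₂) = s`.
  have hshare : (s₁ ^^ s₂) = s := by
    revert hs
    cases s <;> cases s₁ <;> cases s₂ <;> decide
  clear hs
  subst hshare
  -- The selected key is the second one exactly when the shares differ.
  cases s₁ <;> cases s₂
  · rw [← map_fst_uniform (BitVec σ) (BitVec σ), PMF.map_comp]; rfl
  · rw [← map_snd_uniform (BitVec σ) (BitVec σ), PMF.map_comp]; rfl
  · rw [← map_snd_uniform (BitVec σ) (BitVec σ), PMF.map_comp]; rfl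
  · rw [← map_fst_uniform (BitVec σ) (BitVec σ), PMF.map_comp]; rfl
end
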